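/- arXiv:math/9510204 — 2 statements merged into one kernel-verified Lean document; each statement's English description precedes it below -/
import Mathlib

section
/- D classifies the orbits of the homographic action of G on H × H: two pairs (z,w) and (z',w') in H × H lie in the same G-orbit (i.e. there exists g ∈ GL(2,F) with g·z = z' and g·w = w') if and only if N(z − w) · N(z' − conj(w')) = N(z' − w') · N(z − w̄), where conj denotes the conjugation x ↦ x̄ of E over F (this cross-multiplied equality expresses D(z,w) = D(z',w') including the convention about the value ∞). -/
/-- Conjugation `x ↦ x^q` of the quadratic extension `E` of the field `F`
with `q` elements. -/
def conjE (F : Type) [Fintype F] {E : Type} [Monoid E] (z : E) : E :=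
  z ^ (Fintype.card F)

/-- The norm `N(z) = z ⬝ z̄` of `E` over `F`. -/
def normE (F : Type) [Fintype F] {E : Type} [Monoid E] (z : E) : E :=
  z * conjE F z

/-- The homographic (Möbius) action of `GL(2,F)` on the finite upper
half-plane `H = E ∖ F`. -/
noncomputable def mobius (F : Type) [Field F] {E : Type} [Field E] [Algebra F E]
    (g : Matrix.GeneralLinearGroup (Fin 2) F) (z : E) : E :=
  (algebraMap F E ((g : Matrix (Fin 2) (Fin 2) F) 0 0) * z
      + algebraMap F E ((g : Matrix (Fin 2) (Fin 2) F) 0 1)) /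
  (algebraMap F E ((g : Matrix (Fin 2) (Fin 2) F) 1 0) * z
      + algebraMap F E ((g : Matrix (Fin 2) (Fin 2) F) 1 1))

/-!
Write `σ` for conjugation. Since `1, z` is an `F`-basis of `E`, a matrix `g` over `F` with
`g • z = z'` is the same as the choice of its automorphy factor `l = c z + d` in `Eˣ`. The
numerator and the denominator of `g • w` are affine in `w`, hence determined by their values at
`z` and `σ z`, and `g • w = w'` becomes `l * A = σ l * B` with `A = (z' - w') * (σ z - w)` and
`B = (σ z' - w') * (z - w)`. By Hilbert 90 some `l ≠ 0` solves this iff `N A = N B`, which is the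
equality of the two values of `D`.
-/

open scoped MatrixGroups

section QuadraticExtension

variable {F E : Type*} [Field F] [Field E] [Algebra F E]

theorem linearIndependent_one_pair {z : E} (hz : z ∉ Set.range (algebraMap F E)) :
    LinearIndependent F ![1, z] :=
  (LinearIndependent.pair_iff' one_ne_zero).2
    fun a ha ↦ hz ⟨a, (Algebra.algebraMap_eq_smul_one a).trans ha⟩

theorem algebraMap_mul_add_algebraMap_eq_zero_iff {z : E} (hz : z ∉ Set.range (algebraMap F E))
    {c d : F} : algebraMap F E c * z + algebraMap F E d = 0 ↔ c = 0 ∧ d = 0 := by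
  refine ⟨fun h ↦ ?_, fun ⟨hc, hd⟩ ↦ by simp [hc, hd]⟩
  have h_smul : d • (1 : E) + c • z = 0 := by
    rw [← Algebra.algebraMap_eq_smul_one, Algebra.smul_def, add_comm, h]
  exact ((linearIndependent_one_pair hz).eq_zero_of_pair h_smul).symm

theorem exists_algebraMap_mul_add_algebraMap_eq [Algebra.IsQuadraticExtension F E] {z : E}
    (hz : z ∉ Set.range (algebraMap F E)) (t : E) :
    ∃ a b : F, algebraMap F E a * z + algebraMap F E b = t := by
  have hspan := (linearIndependent_one_pair hz).span_eq_top_of_card_eq_finrank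
    (by simp [Algebra.IsQuadraticExtension.finrank_eq_two F E])
  rw [Matrix.range_cons_cons_empty] at hspan
  obtain ⟨b, a, rfl⟩ := Submodule.mem_span_pair.1 (hspan ▸ Submodule.mem_top : t ∈ _)
  exact ⟨a, b, by rw [← Algebra.algebraMap_eq_smul_one, Algebra.smul_def, add_comm]⟩

theorem map_notMem_range_algebraMap {K S : Type*} [Field K] [Algebra F K] [FunLike S E K]
    [AlgHomClass S F E K] (σ : S) {z : E} (hz : z ∉ Set.range (algebraMap F E)) :
    σ z ∉ Set.range (algebraMap F K) := by
  rintro ⟨a, ha⟩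
  exact hz ⟨a, RingHomClass.toRingHom σ |>.injective (by simpa [AlgHomClass.commutes] using ha)⟩

variable [Algebra.IsQuadraticExtension F E] {σ : Gal(E/F)}

theorem map_ne_self_of_notMem_range_algebraMap (hσ : σ ≠ 1) {z : E}
    (hz : z ∉ Set.range (algebraMap F E)) : σ z ≠ z := by
  refine fun hfix ↦ hσ (AlgEquiv.ext fun t ↦ ?_)
  obtain ⟨a, b, rfl⟩ := exists_algebraMap_mul_add_algebraMap_eq hz t
  simp [hfix]

theorem card_gal_eq_two_of_ne_one (hσ : σ ≠ 1) : Nat.card Gal(E/F) = 2 := by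
  have : Nontrivial Gal(E/F) := ⟨σ, 1, hσ⟩
  have hle : Nat.card Gal(E/F) ≤ 2 := by
    rw [Nat.card_eq_fintype_card, ← Algebra.IsQuadraticExtension.finrank_eq_two F E]
    exact AlgEquiv.card_le
  exact le_antisymm hle Finite.one_lt_card

theorem isGalois_of_gal_ne_one (hσ : σ ≠ 1) : IsGalois F E :=
  .of_card_aut_eq_finrank _ _ <| by
    rw [card_gal_eq_two_of_ne_one hσ, Algebra.IsQuadraticExtension.finrank_eq_two]

theorem map_map_of_ne_one (hσ : σ ≠ 1) (x : E) : σ (σ x) = x := by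
  have hsq : σ ^ 2 = 1 := card_gal_eq_two_of_ne_one hσ ▸ pow_card_eq_one'
  simpa [sq] using DFunLike.congr_fun hsq x

theorem norm_map_sub (hσ : σ ≠ 1) (x y : E) :
    Algebra.norm F (σ x - y) = Algebra.norm F (x - σ y) := by
  rw [← Algebra.norm_eq_of_algEquiv σ (x - σ y), map_sub σ, map_map_of_ne_one hσ]

theorem frobeniusAlgEquivOfAlgebraic_ne_one [Fintype F] :
    FiniteField.frobeniusAlgEquivOfAlgebraic F E ≠ 1 := by
  have : Finite E := Module.finite_of_finite F
  rw [Ne, ← orderOf_eq_one_iff, FiniteField.orderOf_frobeniusAlgEquivOfAlgebraic,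
    Algebra.IsQuadraticExtension.finrank_eq_two]
  decide

end QuadraticExtension

section HilbertNinety

variable {F E : Type} [Field F] [Field E] [Algebra F E] [FiniteDimensional F E] [IsGalois F E]
  {σ : Gal(E/F)}

theorem exists_mul_eq_map_mul_iff_norm_eq (hσ : ∀ τ, τ ∈ Subgroup.zpowers σ) {x y : E} :
    (∃ l : E, l ≠ 0 ∧ l * x = σ l * y) ↔ Algebra.norm F x = Algebra.norm F y := by
  constructor
  · rintro ⟨l, hl, h⟩
    have hN := congrArg (Algebra.norm F) h
    rw [map_mul, map_mul, Algebra.norm_eq_of_algEquiv] at hN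
    exact mul_left_cancel₀ (Algebra.norm_ne_zero_iff.2 hl) hN
  · intro h
    obtain rfl | hx := eq_or_ne x 0
    · have hy : y = 0 := Algebra.norm_eq_zero_iff.1 (by rw [← h, Algebra.norm_zero])
      exact ⟨1, one_ne_zero, by simp [hy]⟩
    have hNx : Algebra.norm F x ≠ 0 := Algebra.norm_ne_zero_iff.2 hx
    have hN : Algebra.norm F (y / x) = 1 := by
      rw [div_eq_mul_inv, map_mul, Algebra.norm_inv, ← h, mul_inv_cancel₀ hNx]
    have : IsCyclic Gal(E/F) := ⟨σ, hσ⟩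
    obtain ⟨l, hl⟩ := groupCohomology.exists_div_of_norm_eq_one hσ hN
    have hσl : σ l ≠ 0 := (map_ne_zero σ).2 l.ne_zero
    exact ⟨l, l.ne_zero, by rwa [div_eq_div_iff hσl hx, mul_comm y] at hl⟩

end HilbertNinety

section Mobius

variable {F E : Type} [Field F] [Field E] [Algebra F E]

/-- The automorphy factor `c z + d` of `g = !![a, b; c, d]`, i.e. the denominator of
`mobius F g z`. -/
noncomputable def mobiusDenom (g : GL (Fin 2) F) (z : E) : E :=
  algebraMap F E (g 1 0) * z + algebraMap F E (g 1 1)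

theorem mobiusDenom_ne_zero (g : GL (Fin 2) F) {z : E}
    (hz : z ∉ Set.range (algebraMap F E)) : mobiusDenom g z ≠ 0 := by
  intro h
  obtain ⟨hc, hd⟩ := (algebraMap_mul_add_algebraMap_eq_zero_iff hz).1 h
  exact g.det_ne_zero (by rw [Matrix.det_fin_two, hc, hd, mul_zero, mul_zero, sub_zero])

section Map

variable {K : Type} {S : Type*} [Field K] [Algebra F K] [FunLike S E K] [AlgHomClass S F E K]
  (σ : S) (g : GL (Fin 2) F) (z : E)

theorem map_mobiusDenom : σ (mobiusDenom g z) = mobiusDenom g (σ z) := by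
  simp [mobiusDenom, AlgHomClass.commutes]

theorem map_mobius : σ (mobius F g z) = mobius F g (σ z) := by
  simp [mobius, AlgHomClass.commutes]

end Map

theorem mobius_eq_iff (g : GL (Fin 2) F) {z z' : E} (hz : z ∉ Set.range (algebraMap F E)) :
    mobius F g z = z' ↔
      algebraMap F E (g 0 0) * z + algebraMap F E (g 0 1) = z' * mobiusDenom g z :=
  div_eq_iff (mobiusDenom_ne_zero g hz)

theorem mobius_eq_iff_of_ne (g : GL (Fin 2) F) {z u w w' : E} (huz : u ≠ z)
    (hz : z ∉ Set.range (algebraMap F E)) (hu : u ∉ Set.range (algebraMap F E))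
    (hw : w ∉ Set.range (algebraMap F E)) :
    mobius F g w = w' ↔
      mobiusDenom g z * ((mobius F g z - w') * (u - w)) =
        mobiusDenom g u * ((mobius F g u - w') * (z - w)) := by
  have hgz := (mobius_eq_iff g hz).1 rfl
  have hgu := (mobius_eq_iff g hu).1 rfl
  -- Lagrange interpolation at `z` and `u` of the affine function `num - w' * denom`.
  have interpolation :
      (u - z) * (algebraMap F E (g 0 0) * w + algebraMap F E (g 0 1) - w' * mobiusDenom g w) =
        mobiusDenom g z * ((mobius F g z - w') * (u - w)) -
          mobiusDenom g u * ((mobius F g u - w') * (z - w)) := by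
    simp only [mobiusDenom] at hgz hgu ⊢
    linear_combination (u - w) * hgz - (z - w) * hgu
  rw [mobius_eq_iff g hw, ← sub_eq_zero, ← sub_eq_zero (a := mobiusDenom g z * _),
    ← interpolation, mul_eq_zero, or_iff_right (sub_ne_zero.2 huz)]

theorem det_ne_zero_of_mul_add_eq {a b c d : F} {z z' l : E}
    (hz' : z' ∉ Set.range (algebraMap F E)) (hl : l ≠ 0)
    (hnum : algebraMap F E a * z + algebraMap F E b = z' * l)
    (hdenom : algebraMap F E c * z + algebraMap F E d = l) : !![a, b; c, d].det ≠ 0 := by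
  rw [Matrix.det_fin_two_of]
  intro hdet
  replace hdet : algebraMap F E a * algebraMap F E d - algebraMap F E b * algebraMap F E c = 0 := by
    simpa using congrArg (algebraMap F E) hdet
  have hac : algebraMap F E c * z' + algebraMap F E (-a) = 0 := by
    rw [map_neg]
    refine mul_right_cancel₀ hl ?_
    linear_combination -hdet + algebraMap F E a * hdenom - algebraMap F E c * hnum
  have hbd : algebraMap F E d * z' + algebraMap F E (-b) = 0 := by
    rw [map_neg]
    refine mul_right_cancel₀ hl ?_
    linear_combination z * hdet + algebraMap F E b * hdenom - algebraMap F E d * hnum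
  obtain ⟨rfl, -⟩ := (algebraMap_mul_add_algebraMap_eq_zero_iff hz').1 hac
  obtain ⟨rfl, -⟩ := (algebraMap_mul_add_algebraMap_eq_zero_iff hz').1 hbd
  exact hl (by simpa using hdenom.symm)

variable [Algebra.IsQuadraticExtension F E]

theorem exists_mobius_eq_and_mobiusDenom_eq {z z' l : E} (hz : z ∉ Set.range (algebraMap F E))
    (hz' : z' ∉ Set.range (algebraMap F E)) (hl : l ≠ 0) :
    ∃ g : GL (Fin 2) F, mobius F g z = z' ∧ mobiusDenom g z = l := by
  obtain ⟨a, b, hnum⟩ := exists_algebraMap_mul_add_algebraMap_eq hz (z' * l)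
  obtain ⟨c, d, hdenom⟩ := exists_algebraMap_mul_add_algebraMap_eq hz l
  let g : GL (Fin 2) F := .mkOfDetNeZero _ (det_ne_zero_of_mul_add_eq hz' hl hnum hdenom)
  have hg : mobiusDenom g z = l := hdenom
  exact ⟨g, (mobius_eq_iff g hz).2 (hg ▸ hnum), hg⟩

theorem exists_mobius_eq_and_mobius_eq_iff {σ : Gal(E/F)} (hσ : σ ≠ 1) {z w z' w' : E}
    (hz : z ∉ Set.range (algebraMap F E)) (hw : w ∉ Set.range (algebraMap F E))
    (hz' : z' ∉ Set.range (algebraMap F E)) :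
    (∃ g : GL (Fin 2) F, mobius F g z = z' ∧ mobius F g w = w') ↔
      ∃ l : E, l ≠ 0 ∧ l * ((z' - w') * (σ z - w)) = σ l * ((σ z' - w') * (z - w)) := by
  have mobius_w_iff (g : GL (Fin 2) F) := mobius_eq_iff_of_ne g (w' := w')
    (map_ne_self_of_notMem_range_algebraMap hσ hz) hz (map_notMem_range_algebraMap σ hz) hw
  simp only [← map_mobius, ← map_mobiusDenom] at mobius_w_iff
  constructor
  · rintro ⟨g, rfl, hgw⟩
    exact ⟨mobiusDenom g z, mobiusDenom_ne_zero g hz, (mobius_w_iff g).1 hgw⟩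
  · rintro ⟨l, hl, h⟩
    obtain ⟨g, rfl, rfl⟩ := exists_mobius_eq_and_mobiusDenom_eq hz hz' hl
    exact ⟨g, rfl, (mobius_w_iff g).2 h⟩

theorem D_classifies_orbits_general {σ : Gal(E/F)} (hσ : σ ≠ 1) {z w z' w' : E}
    (hz : z ∉ Set.range (algebraMap F E)) (hw : w ∉ Set.range (algebraMap F E))
    (hz' : z' ∉ Set.range (algebraMap F E)) :
    (∃ g : GL (Fin 2) F, mobius F g z = z' ∧ mobius F g w = w') ↔
      Algebra.norm F (z - w) * Algebra.norm F (z' - σ w') =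
        Algebra.norm F (z' - w') * Algebra.norm F (z - σ w) := by
  have := isGalois_of_gal_ne_one hσ
  have hgen (τ : Gal(E/F)) : τ ∈ Subgroup.zpowers σ :=
    mem_zpowers_of_prime_card (card_gal_eq_two_of_ne_one hσ) hσ
  rw [exists_mobius_eq_and_mobius_eq_iff hσ hz hw hz', exists_mul_eq_map_mul_iff_norm_eq hgen,
    map_mul, map_mul, norm_map_sub hσ, norm_map_sub hσ, eq_comm,
    mul_comm (Algebra.norm F (z' - σ w'))]

end Mobius

theorem normE_eq_algebraMap_norm {F E : Type} [Field F] [Fintype F] [Field E] [Algebra F E]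
    [Algebra.IsQuadraticExtension F E] (x : E) :
    normE F x = algebraMap F E (Algebra.norm F x) := by
  have : Finite E := Module.finite_of_finite F
  rw [FiniteField.algebraMap_norm_eq_pow_sum, Algebra.IsQuadraticExtension.finrank_eq_two]
  simp [normE, conjE, Finset.sum_range_succ, pow_add]

/-- **`D` classifies the `G`-orbits** in `H × H`: two pairs of points of the
finite upper half-plane `H = E ∖ F` lie in the same orbit of the homographic
action of `GL(2,F)` iff they have the same value of the invariant
`D(z,w) = N(z−w)/N(z−w̄)`, written in cross-multiplied form. -/
theorem D_classifies_orbits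
    (F E : Type) [Field F] [Fintype F] [Field E] [Fintype E] [Algebra F E]
    (hdim : Module.finrank F E = 2)
    (z w z' w' : E)
    (hz : z ∉ Set.range (algebraMap F E)) (hw : w ∉ Set.range (algebraMap F E))
    (hz' : z' ∉ Set.range (algebraMap F E))
    (hw' : w' ∉ Set.range (algebraMap F E)) :
    (∃ g : Matrix.GeneralLinearGroup (Fin 2) F,
        mobius F g z = z' ∧ mobius F g w = w')
      ↔ normE F (z - w) * normE F (z' - conjE F w')
          = normE F (z' - w') * normE F (z - conjE F w) := by
  have : Algebra.IsQuadraticExtension F E := ⟨hdim⟩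
  simp only [normE_eq_algebraMap_norm, ← map_mul (algebraMap F E),
    (algebraMap F E).injective.eq_iff]
  exact D_classifies_orbits_general frobeniusAlgEquivOfAlgebraic_ne_one hz hw hz'
end

section
/- The dimension of the center of the twisted Hecke algebra equals the number of irreducible representations appearing in Ind_K^G Φ: the dimension of the ℂ-vector space of functions h ∈ L¹_Φ(G,K) that commute under convolution with every element of L¹_Φ(G,K) equals the number of isomorphism classes of irreducible complex representations (π, V) of G such that there exists a nonzero v ∈ V with π(k) v = Φ(k) v for all k ∈ K. -/
/-- A representation is irreducible: the space is nonzero and the only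
invariant submodules are `⊥` and `⊤`. -/
def RepIsIrreducible {G V : Type} [Group G] [AddCommGroup V] [Module ℂ V]
    (π : Representation ℂ G V) : Prop :=
  (∃ v : V, v ≠ 0) ∧
    ∀ W : Submodule ℂ V, (∀ g : G, ∀ v ∈ W, π g v ∈ W) → W = ⊥ ∨ W = ⊤

/-- Convolution of complex functions on a finite group. -/
noncomputable def conv {G : Type} [Group G] [Fintype G] (f f' : G → ℂ) : G → ℂ :=
  fun g => ∑ h : G, f h * f' (h⁻¹ * g)

/-- Membership in the twisted Hecke algebra `L¹_Φ(G,K)` :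
`f(k g k') = Φ(k) f(g) Φ(k')` for all `g ∈ G`, `k, k' ∈ K`. -/
def InTwistedHecke {G : Type} [Group G] (K : Subgroup G) (Φ : K →* ℂˣ)
    (f : G → ℂ) : Prop :=
  ∀ (g : G) (k k' : K), f ((k : G) * g * (k' : G)) = (Φ k : ℂ) * f g * (Φ k' : ℂ)

/-- The center of the twisted Hecke algebra `L¹_Φ(G,K)`, as a `ℂ`-subspace of
the space of all complex functions on `G`. -/
noncomputable def twistedHeckeCenter (G : Type) [Group G] [Fintype G]
    (K : Subgroup G) (Φ : K →* ℂˣ) : Submodule ℂ (G → ℂ) where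
  carrier := {h | InTwistedHecke K Φ h ∧
    ∀ f : G → ℂ, InTwistedHecke K Φ f → conv h f = conv f h}
  add_mem' := by
    rintro h₁ h₂ ⟨m₁, c₁⟩ ⟨m₂, c₂⟩
    constructor
    · intro g k k'
      simp only [Pi.add_apply, m₁ g k k', m₂ g k k']; ring
    · intro f hf
      funext g
      have e₁ := congrFun (c₁ f hf) g
      have e₂ := congrFun (c₂ f hf) g
      simp only [conv] at e₁ e₂
      simp only [conv, Pi.add_apply, add_mul, mul_add, Finset.sum_add_distrib,
        e₁, e₂]
  zero_mem' := by
    constructor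
    · intro g k k'; simp
    · intro f hf; funext g; simp [conv]
  smul_mem' := by
    rintro c h ⟨mh, ch⟩
    constructor
    · intro g k k'
      simp only [Pi.smul_apply, smul_eq_mul, mh g k k']; ring
    · intro f hf
      funext g
      have e := congrFun (ch f hf) g
      simp only [conv] at e
      calc ∑ x : G, (c • h) x * f (x⁻¹ * g)
          = c * ∑ x : G, h x * f (x⁻¹ * g) := by
            rw [Finset.mul_sum]
            exact Finset.sum_congr rfl fun x _ => by
              simp only [Pi.smul_apply, smul_eq_mul, mul_assoc]
        _ = c * ∑ x : G, f x * h (x⁻¹ * g) := by rw [e]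
        _ = ∑ x : G, f x * (c • h) (x⁻¹ * g) := by
            rw [Finset.mul_sum]
            exact Finset.sum_congr rfl fun x _ => by
              simp only [Pi.smul_apply, smul_eq_mul]; ring

/-!
Send a function `f` on `G` to the family of operators `∑ g, f g • π i g⁻¹` on the irreducible
representations `V i`. By Jacobson density and Maschke's theorem this is a linear isomorphism from
the functions on `G` onto `∏ i, End (V i)`, and it reverses convolution products. It carries
`L¹_Φ(G,K)` onto the corner cut out by the idempotent `e` whose component `e i` projects `V i` onto
the vectors on which `K` acts through `Φ`. The corner of `End (V i)` at `e i` is the endomorphism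
algebra of the range of `e i`, so its center is spanned by `e i`. The dimension of the center of
`L¹_Φ(G,K)` is therefore the number of nonzero `e i`, that is, of the `V i` containing `Φ`.
-/

section Density

variable {A : Type*} [Ring A]

theorem eq_zero_of_forall_smul_quotient_eq_zero [IsSemisimpleRing A] {a : A}
    (ha : ∀ m : Ideal A, IsCoatom m → ∀ x : A ⧸ m, a • x = 0) : a = 0 := by
  have ha_mem : a ∈ Ring.jacobson A := Submodule.mem_sInf.2 fun m hm => by
    have h := ha m hm (Submodule.Quotient.mk 1)
    rwa [← Submodule.Quotient.mk_smul, Submodule.Quotient.mk_eq_zero, smul_eq_mul, mul_one] at h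
  rwa [IsSemisimpleRing.jacobson_eq_bot, Submodule.mem_bot] at ha_mem

variable {k ι : Type*} [Field k] [IsAlgClosed k] [Algebra k A] [Finite ι] {M : ι → Type*}
  [∀ i, AddCommGroup (M i)] [∀ i, Module k (M i)] [∀ i, Module A (M i)]
  [∀ i, IsScalarTower k A (M i)] [∀ i, FiniteDimensional k (M i)] [∀ i, IsSimpleModule A (M i)]

theorem exists_end_pi_apply_eq_smul (hM : Pairwise fun i j => IsEmpty (M i ≃ₗ[A] M j))
    (φ : Module.End A (∀ i, M i)) (i : ι) : ∃ c : k, ∀ m, φ m i = c • m i := by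
  classical
  cases nonempty_fintype ι
  let component (j : ι) : M j →ₗ[A] M i := LinearMap.proj i ∘ₗ φ ∘ₗ LinearMap.single A M j
  have offDiagonal_eq_zero (j : ι) (hj : j ≠ i) : component j = 0 :=
    (LinearMap.bijective_or_eq_zero (component j)).resolve_left fun h =>
      (hM hj).false (LinearEquiv.ofBijective _ h)
  obtain ⟨c, hc⟩ :=
    (IsSimpleModule.algebraMap_end_bijective_of_isAlgClosed (A := A) k).2 (component i)
  refine ⟨c, fun m => ?_⟩
  calc φ m i = ∑ j, component j (m j) := by
        conv_lhs => rw [← Finset.univ_sum_single m]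
        simp [component]
    _ = component i (m i) :=
        Fintype.sum_eq_single i fun j hj => by rw [offDiagonal_eq_zero j hj, LinearMap.zero_apply]
    _ = c • m i := by rw [← hc, Module.algebraMap_end_apply]

theorem exists_forall_smul_eq_of_pairwise_isEmpty_linearEquiv
    (hM : Pairwise fun i j => IsEmpty (M i ≃ₗ[A] M j)) (T : ∀ i, Module.End k (M i)) :
    ∃ a : A, ∀ i m, a • m = T i m := by
  classical
  let T_pi : Module.End (Module.End A (∀ i, M i)) (∀ i, M i) :=
    { toFun m i := T i (m i)
      map_add' x y := by ext i; simp
      map_smul' φ m := by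
        ext i
        obtain ⟨c, hc⟩ := exists_end_pi_apply_eq_smul (k := k) hM φ i
        simp [Module.End.smul_def, hc] }
  have : Module.Finite (Module.End A (∀ i, M i)) (∀ i, M i) := .of_restrictScalars_finite k _ _
  obtain ⟨a, ha⟩ := Module.Finite.toModuleEnd_moduleEnd_surjective T_pi
  refine ⟨a, fun i m => ?_⟩
  simpa [T_pi] using congr($ha (Pi.single i m) i)

end Density

section GroupAlgebra

open Representation
open scoped MonoidAlgebra

section CommSemiring

variable {k G : Type*} [CommSemiring k] [Monoid G]

theorem lift_monoidHomPi_apply {ι : Type*} {V : ι → Type*} [∀ i, AddCommMonoid (V i)]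
    [∀ i, Module k (V i)] (π : ∀ i, Representation k G (V i)) (a : k[G]) (i : ι) :
    MonoidAlgebra.lift k (∀ i, Module.End k (V i)) G (MonoidHom.pi π) a i =
      (π i).asAlgebraHom a := by
  have h : (Pi.evalAlgHom k _ i).comp
      (MonoidAlgebra.lift k (∀ i, Module.End k (V i)) G (MonoidHom.pi π)) =
      (π i).asAlgebraHom := by
    ext g : 2
    simp
  exact congr($h a)

theorem conj_asAlgebraHom_apply {V W : Type*} [AddCommMonoid V] [Module k V]
    [AddCommMonoid W] [Module k W] {ρ : Representation k G V} {σ : Representation k G W}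
    (e : ρ.Equiv σ) (a : k[G]) : e.conj (ρ.asAlgebraHom a) = σ.asAlgebraHom a := by
  have h : (e.toLinearEquiv.conjAlgEquiv k).toAlgHom.comp ρ.asAlgebraHom = σ.asAlgebraHom := by
    ext g x
    simpa using! congr($(Equiv.conj_apply_self g e) x)
  exact congr($h a)

theorem asAlgebraHom_ofModule' (M : Type*) [AddCommMonoid M] [Module k M] [Module k[G] M]
    [IsScalarTower k k[G] M] :
    (ofModule' M : Representation k G M).asAlgebraHom = Algebra.lsmul k k M :=
  (MonoidAlgebra.lift k (Module.End k M) G).apply_symm_apply _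

end CommSemiring

theorem isIrreducible_ofModule' {k G : Type*} [Field k] [Monoid G] (M : Type*) [AddCommGroup M]
    [Module k M] [Module k[G] M] [IsScalarTower k k[G] M] [IsSimpleModule k[G] M] :
    (ofModule' M : Representation k G M).IsIrreducible := by
  let e : (ofModule' M : Representation k G M).asModule ≃ₗ[k[G]] M :=
    { (ofModule' M : Representation k G M).asModuleEquiv with
      map_smul' a x := by simp [asAlgebraHom_ofModule'] }
  exact (irreducible_iff_isSimpleModule_asModule _).2 (IsSimpleModule.congr e)

universe uk uG

variable {k : Type uk} {G : Type uG} [Field k] {ι : Type*} {V : ι → Type*}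
  [∀ i, AddCommGroup (V i)] [∀ i, Module k (V i)]

theorem lift_monoidHomPi_surjective [Monoid G] [IsAlgClosed k] [Finite ι]
    [∀ i, FiniteDimensional k (V i)] (π : ∀ i, Representation k G (V i))
    [∀ i, (π i).IsIrreducible] (hπ : Pairwise fun i j => IsEmpty ((π i).Equiv (π j))) :
    Function.Surjective
      (MonoidAlgebra.lift k (∀ i, Module.End k (V i)) G (MonoidHom.pi π)) := by
  intro T
  have hM : Pairwise fun i j => IsEmpty ((π i).asModule ≃ₗ[k[G]] (π j).asModule) :=
    fun i j hij => ⟨fun e => (hπ hij).false <|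
      ((IntertwiningMap.equivLinearMapAsModule (π i) (π j)).symm e).ofBijective e.bijective⟩
  obtain ⟨a, ha⟩ := exists_forall_smul_eq_of_pairwise_isEmpty_linearEquiv hM
    fun i => (π i).asModuleEquiv.symm.conj (T i)
  refine ⟨a, funext fun i => LinearMap.ext fun v => ?_⟩
  rw [lift_monoidHomPi_apply]
  exact ha i ((π i).asModuleEquiv.symm v)

theorem lift_monoidHomPi_injective [Group G] [Finite G] [NeZero (Nat.card G : k)]
    (π : ∀ i, Representation k G (V i))
    (hπ : ∀ (W : Type (max uG uk)) [AddCommGroup W] [Module k W] [FiniteDimensional k W]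
      (ρ : Representation k G W), ρ.IsIrreducible → ∃ i, Nonempty (ρ.Equiv (π i))) :
    Function.Injective
      (MonoidAlgebra.lift k (∀ i, Module.End k (V i)) G (MonoidHom.pi π)) := by
  rw [injective_iff_map_eq_zero]
  intro a ha
  refine eq_zero_of_forall_smul_quotient_eq_zero fun m hm x => ?_
  have : IsSimpleModule k[G] (k[G] ⧸ m) := isSimpleModule_iff_isCoatom.2 hm
  have : FiniteDimensional k (k[G] ⧸ m) := Module.Finite.trans k[G] _
  obtain ⟨i, ⟨e⟩⟩ := hπ (k[G] ⧸ m) (ofModule' _) (isIrreducible_ofModule' _)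
  have asAlgebraHom_eq_zero :
      (ofModule' (k[G] ⧸ m) : Representation k G (k[G] ⧸ m)).asAlgebraHom a = 0 := by
    rw [← e.conj.map_eq_zero_iff, conj_asAlgebraHom_apply, ← lift_monoidHomPi_apply, ha,
      Pi.zero_apply]
  simpa [asAlgebraHom_ofModule'] using congr($asAlgebraHom_eq_zero x)

end GroupAlgebra

section Corner

/-- The center of the corner `e * B * e` of an algebra `B` at an idempotent `e`, as a subspace
of `B` rather than of the corner. -/
def cornerCenter (k : Type*) {B : Type*} [CommSemiring k] [Semiring B] [Algebra k B] (e : B) :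
    Submodule k B :=
  LinearMap.range (LinearMap.mulLeftRight k (e, e)) ⊓
    (Subalgebra.centralizer k (Subsemigroup.corner e : Set B)).toSubmodule

section Semiring

variable {k : Type*} [CommSemiring k]

theorem mem_cornerCenter_iff {B : Type*} [Semiring B] [Algebra k B] {e z : B}
    (he : IsIdempotentElem e) :
    z ∈ cornerCenter k e ↔
      (e * z = z ∧ z * e = z) ∧ ∀ b, e * b = b → b * e = b → z * b = b * z := by
  have mem_range : z ∈ LinearMap.range (LinearMap.mulLeftRight k (e, e)) ↔
      e * z = z ∧ z * e = z := by
    rw [← Subsemigroup.mem_corner_iff he]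
    simp [Subsemigroup.corner, eq_comm]
  simp only [cornerCenter, Submodule.mem_inf, mem_range, Subalgebra.mem_toSubmodule,
    Subalgebra.mem_centralizer_iff, SetLike.mem_coe, Subsemigroup.mem_corner_iff he, and_imp]
  simp only [eq_comm]

variable {ι : Type*} {B : ι → Type*} [∀ i, Semiring (B i)] [∀ i, Algebra k (B i)] {e : ∀ i, B i}

theorem cornerCenter_pi (he : IsIdempotentElem e) :
    cornerCenter k e = Submodule.pi Set.univ fun i => cornerCenter k (e i) := by
  classical
  ext z
  have he_apply (i : ι) : IsIdempotentElem (e i) := congr_fun he i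
  simp only [Submodule.mem_pi, Set.mem_univ, forall_const, mem_cornerCenter_iff he,
    mem_cornerCenter_iff (he_apply _), forall_and, funext_iff, Pi.mul_apply]
  refine and_congr_right fun _ => ⟨fun h i b heb hbe => ?_, fun h b heb hbe i => ?_⟩
  · have single_mem (j : ι) : e j * Pi.single i b j = Pi.single i b j ∧
        Pi.single i b j * e j = Pi.single i b j := by
      obtain rfl | hj := eq_or_ne j i
      · simp [heb, hbe]
      · simp [hj]
    simpa using h (Pi.single i b) (fun j => (single_mem j).1) (fun j => (single_mem j).2) i
  · exact h i (b i) (heb i) (hbe i)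

end Semiring

variable {k : Type*} [Field k]

theorem finrank_pi_span_singleton {ι : Type*} [Finite ι] {V : ι → Type*}
    [∀ i, AddCommGroup (V i)] [∀ i, Module k (V i)] (v : ∀ i, V i) :
    Module.finrank k (Submodule.pi Set.univ fun i => k ∙ v i) = Nat.card {i // v i ≠ 0} := by
  classical
  cases nonempty_fintype ι
  let e : Submodule.pi Set.univ (fun i => k ∙ v i) ≃ₗ[k] ∀ i, k ∙ v i :=
    { toFun z i := ⟨z.1 i, z.2 i trivial⟩
      invFun z := ⟨fun i => z i, fun i _ => (z i).2⟩
      map_add' _ _ := rfl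
      map_smul' _ _ := rfl }
  have finrank_span (i : ι) : Module.finrank k (k ∙ v i) = if v i ≠ 0 then 1 else 0 := by
    split_ifs with hv
    · exact finrank_span_singleton hv
    · simp [not_not.1 hv]
  rw [e.finrank_eq, Module.finrank_pi_fintype, Finset.sum_congr rfl fun i _ => finrank_span i,
    Finset.sum_boole, Nat.card_eq_fintype_card, Fintype.card_subtype, Nat.cast_id]

theorem cornerCenter_end_eq_span {V : Type*} [AddCommGroup V] [Module k V] {p : Module.End k V}
    (hp : IsIdempotentElem p) : cornerCenter k p = k ∙ p := by
  ext T
  rw [mem_cornerCenter_iff hp, Submodule.mem_span_singleton]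
  constructor
  · rintro ⟨⟨hpT, hTp⟩, hT⟩
    obtain rfl | hp_ne := eq_or_ne p 0
    · exact ⟨0, by simpa using hpT⟩
    obtain ⟨u, hu⟩ := DFunLike.ne_iff.1 hp_ne
    obtain ⟨φ, hφ⟩ := Module.Projective.exists_dual_eq_one k hu
    -- Commuting with the corner elements of rank one makes every `p w` an eigenvector of `T`.
    refine ⟨φ (T u), LinearMap.ext fun w => ?_⟩
    have hcomm := hT (p * φ.smulRight w * p) (by rw [← mul_assoc, ← mul_assoc, hp.eq])
      (by rw [mul_assoc, hp.eq])
    have hpT_apply (v : V) : p (T v) = T v := congr($hpT v)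
    have hTp_apply (v : V) : T (p v) = T v := congr($hTp v)
    simpa [hφ, hpT_apply, hTp_apply] using congr($hcomm u).symm
  · rintro ⟨c, rfl⟩
    simp +contextual [hp.eq]

theorem finrank_cornerCenter_pi_end {ι : Type*} [Finite ι] {V : ι → Type*}
    [∀ i, AddCommGroup (V i)] [∀ i, Module k (V i)] {p : ∀ i, Module.End k (V i)}
    (hp : IsIdempotentElem p) :
    Module.finrank k (cornerCenter k p) = Nat.card {i // p i ≠ 0} := by
  have cornerCenter_apply (i : ι) : cornerCenter k (p i) = k ∙ p i :=
    cornerCenter_end_eq_span (congr_fun hp i)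
  rw [cornerCenter_pi hp, funext cornerCenter_apply, finrank_pi_span_singleton]

end Corner

section CharacterIdempotent

theorem inv_card_smul_sum_const {k X M : Type*} [Field k] [Fintype X] [NeZero (Nat.card X : k)]
    [AddCommMonoid M] [Module k M] (m : M) : (Nat.card X : k)⁻¹ • ∑ _x : X, m = m := by
  rw [Finset.sum_const, Finset.card_univ, ← Nat.card_eq_fintype_card, ← Nat.cast_smul_eq_nsmul k,
    inv_smul_smul₀ (NeZero.ne _)]

variable {k K B : Type*} [Field k] [Group K] [Fintype K] [Semiring B] [Algebra k B]

/-- The idempotent of a one-dimensional character `Φ` of a finite group, transported to an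
algebra `B` by a homomorphism `u` into it: for a representation `u`, the projector onto the vectors
on which the group acts through `Φ`. -/
noncomputable def characterIdempotent (Φ : K →* kˣ) (u : K →* B) : B :=
  (Nat.card K : k)⁻¹ • ∑ x, (Φ x⁻¹ : k) • u x

variable (Φ : K →* kˣ) (u : K →* B)

theorem map_characterIdempotent {C : Type*} [Semiring C] [Algebra k C] (f : B →ₐ[k] C) :
    f (characterIdempotent Φ u) = characterIdempotent Φ ((f : B →* C).comp u) := by
  simp [characterIdempotent]

theorem mul_characterIdempotent (x : K) :
    u x * characterIdempotent Φ u = (Φ x : k) • characterIdempotent Φ u := by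
  simp only [characterIdempotent, mul_smul_comm, smul_comm (Φ x : k), Finset.mul_sum,
    Finset.smul_sum (r := (Φ x : k))]
  congr 1
  exact Fintype.sum_equiv (Equiv.mulLeft x) _ _ fun y => by simp [smul_smul, mul_comm]

theorem characterIdempotent_mul (x : K) :
    characterIdempotent Φ u * u x = (Φ x : k) • characterIdempotent Φ u := by
  simp only [characterIdempotent, smul_mul_assoc, smul_comm (Φ x : k), Finset.sum_mul,
    Finset.smul_sum (r := (Φ x : k))]
  congr 1
  exact Fintype.sum_equiv (Equiv.mulRight x) _ _ fun y => by
    simp [smul_smul, mul_right_comm]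

variable {Φ u} [NeZero (Nat.card K : k)]


theorem characterIdempotent_smul_eq_self_iff {M : Type*} [AddCommMonoid M] [Module k M] [Module B M]
    [IsScalarTower k B M] {m : M} :
    characterIdempotent Φ u • m = m ↔ ∀ x, u x • m = (Φ x : k) • m := by
  refine ⟨fun h x => ?_, fun h => ?_⟩
  · rw [← h, ← mul_smul, mul_characterIdempotent, smul_assoc]
  · have summand_eq (x : K) : (Φ x⁻¹ : k) • u x • m = m := by simp [h, smul_smul]
    simp only [characterIdempotent, smul_assoc, Finset.sum_smul, summand_eq,
      inv_card_smul_sum_const]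

theorem mul_characterIdempotent_eq_self_iff {b : B} :
    b * characterIdempotent Φ u = b ↔ ∀ x, b * u x = (Φ x : k) • b := by
  refine ⟨fun h x => ?_, fun h => ?_⟩
  · rw [← h, mul_assoc, characterIdempotent_mul, mul_smul_comm]
  · have summand_eq (x : K) : (Φ x⁻¹ : k) • (b * u x) = b := by simp [h, smul_smul]
    simp only [characterIdempotent, mul_smul_comm, Finset.mul_sum, summand_eq,
      inv_card_smul_sum_const]

theorem isIdempotentElem_characterIdempotent : IsIdempotentElem (characterIdempotent Φ u) :=
  mul_characterIdempotent_eq_self_iff.2 (characterIdempotent_mul Φ u)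

theorem characterIdempotent_ne_zero_iff {V : Type*} [AddCommGroup V] [Module k V]
    {ρ : Representation k K V} :
    characterIdempotent Φ ρ ≠ 0 ↔ ∃ v ≠ 0, ∀ x, ρ x v = (Φ x : k) • v := by
  refine ⟨fun h => ?_, ?_⟩
  · obtain ⟨v, hv⟩ := DFunLike.ne_iff.1 h
    exact ⟨_, hv, fun x => congr($(mul_characterIdempotent Φ ρ x) v)⟩
  · rintro ⟨v, hv, hΦ⟩ h
    have hv_fixed : characterIdempotent Φ ρ • v = v :=
      characterIdempotent_smul_eq_self_iff.2 hΦ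
    exact hv (by rw [← hv_fixed, h, zero_smul])

end CharacterIdempotent

section AntiFourier

variable (k : Type*) {G B : Type*} [CommSemiring k] [Group G] [Fintype G] [Semiring B] [Algebra k B]

/-- The transform `f ↦ ∑ g, f g • u g⁻¹` of functions on a finite group. Evaluating `u` at `g⁻¹`
makes it reverse convolution products, but lets `f` and its transform have the same equivariance
character under translations by a subgroup. -/
noncomputable def antiFourier (u : G →* B) : (G → k) →ₗ[k] B :=
  Fintype.linearCombination k fun g => u g⁻¹

variable {k} (u : G →* B)

theorem antiFourier_apply (f : G → k) : antiFourier k u f = ∑ g, f g • u g⁻¹ := rfl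

theorem antiFourier_comp_mul_left (f : G → k) (x : G) :
    antiFourier k u (fun g => f (x * g)) = antiFourier k u f * u x := by
  simp only [antiFourier_apply, Finset.sum_mul]
  exact Fintype.sum_equiv (Equiv.mulLeft x) _ _ fun g => by simp [← map_mul]

theorem antiFourier_comp_mul_right (f : G → k) (x : G) :
    antiFourier k u (fun g => f (g * x)) = u x * antiFourier k u f := by
  simp only [antiFourier_apply, Finset.mul_sum]
  exact Fintype.sum_equiv (Equiv.mulRight x) _ _ fun g => by simp [← map_mul]

theorem antiFourier_coeff_inv (a : MonoidAlgebra k G) :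
    antiFourier k u (fun g => a.coeff g⁻¹) = MonoidAlgebra.lift k B G u a := by
  rw [antiFourier_apply, MonoidAlgebra.lift_apply, Finsupp.sum_fintype _ _ (by simp)]
  exact Fintype.sum_equiv (Equiv.inv G) _ _ fun g => by simp

theorem antiFourier_bijective (hu : Function.Bijective (MonoidAlgebra.lift k B G u)) :
    Function.Bijective (antiFourier k u) := by
  let coeffInv : MonoidAlgebra k G ≃ (G → k) :=
    (MonoidAlgebra.coeffEquiv.trans Finsupp.equivFunOnFinite).trans
      ((Equiv.inv G).arrowCongr (Equiv.refl k))
  have antiFourier_comp : antiFourier k u ∘ coeffInv = MonoidAlgebra.lift k B G u :=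
    funext (antiFourier_coeff_inv u)
  rwa [← Function.Bijective.of_comp_iff _ coeffInv.bijective, antiFourier_comp]

end AntiFourier

section TwistedHecke

variable {G : Type} [Group G] {K : Subgroup G} {Φ : K →* ℂˣ}

theorem inTwistedHecke_iff_translate {f : G → ℂ} :
    InTwistedHecke K Φ f ↔
      (∀ x : K, (fun g => f (g * x)) = (Φ x : ℂ) • f) ∧
        ∀ x : K, (fun g => f (x * g)) = (Φ x : ℂ) • f := by
  simp only [funext_iff, Pi.smul_apply, smul_eq_mul]
  refine ⟨fun h => ⟨fun x g => by simpa [mul_comm] using h g 1 x,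
    fun x g => by simpa using h g x 1⟩, fun ⟨hright, hleft⟩ g x y => ?_⟩
  rw [hright, hleft, mul_comm]

variable [Fintype G]

theorem mem_twistedHeckeCenter_iff {h : G → ℂ} :
    h ∈ twistedHeckeCenter G K Φ ↔
      InTwistedHecke K Φ h ∧ ∀ f, InTwistedHecke K Φ f → conv h f = conv f h :=
  Iff.rfl

theorem antiFourier_conv {B : Type*} [Semiring B] [Algebra ℂ B] (u : G →* B) (f f' : G → ℂ) :
    antiFourier ℂ u (conv f f') = antiFourier ℂ u f' * antiFourier ℂ u f := by
  have translate (h : G) : ∑ g, f' (h⁻¹ * g) • u g⁻¹ = antiFourier ℂ u f' * u h⁻¹ :=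
    antiFourier_comp_mul_left u f' h⁻¹
  calc antiFourier ℂ u (conv f f') = ∑ h, f h • ∑ g, f' (h⁻¹ * g) • u g⁻¹ := by
        simp only [antiFourier_apply, conv, Finset.sum_smul, Finset.smul_sum, smul_smul]
        exact Finset.sum_comm
    _ = antiFourier ℂ u f' * antiFourier ℂ u f := by
        simp only [translate, antiFourier_apply u f, Finset.mul_sum, mul_smul_comm]

variable {B : Type*} [Semiring B] [Algebra ℂ B] {u : G →* B} [Fintype K]

theorem inTwistedHecke_iff_antiFourier (hu : Function.Injective (antiFourier ℂ u)) {f : G → ℂ} :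
    InTwistedHecke K Φ f ↔
      characterIdempotent Φ (u.comp K.subtype) * antiFourier ℂ u f = antiFourier ℂ u f ∧
        antiFourier ℂ u f * characterIdempotent Φ (u.comp K.subtype) = antiFourier ℂ u f := by
  rw [← smul_eq_mul, characterIdempotent_smul_eq_self_iff, mul_characterIdempotent_eq_self_iff,
    inTwistedHecke_iff_translate]
  simp only [MonoidHom.comp_apply, Subgroup.subtype_apply, smul_eq_mul,
    ← antiFourier_comp_mul_right, ← antiFourier_comp_mul_left, ← map_smul, hu.eq_iff]

theorem map_antiFourier_twistedHeckeCenter (hu : Function.Bijective (antiFourier ℂ u)) :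
    (twistedHeckeCenter G K Φ).map (antiFourier ℂ u) =
      cornerCenter ℂ (characterIdempotent Φ (u.comp K.subtype)) := by
  ext z
  obtain ⟨h, rfl⟩ := hu.2 z
  rw [← SetLike.mem_coe, Submodule.map_coe, hu.1.mem_set_image, SetLike.mem_coe,
    mem_twistedHeckeCenter_iff, mem_cornerCenter_iff isIdempotentElem_characterIdempotent,
    ← inTwistedHecke_iff_antiFourier hu.1]
  simp only [hu.2.forall, ← and_imp, ← inTwistedHecke_iff_antiFourier hu.1, ← antiFourier_conv,
    hu.1.eq_iff, eq_comm (a := conv h _)]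

theorem finrank_twistedHeckeCenter_eq_finrank_cornerCenter
    (hu : Function.Bijective (antiFourier ℂ u)) :
    Module.finrank ℂ (twistedHeckeCenter G K Φ) =
      Module.finrank ℂ (cornerCenter ℂ (characterIdempotent Φ (u.comp K.subtype))) := by
  rw [← map_antiFourier_twistedHeckeCenter hu]
  exact (Submodule.equivMapOfInjective _ hu.1 _).finrank_eq

end TwistedHecke

section Irreducible

variable {G V : Type} [Group G] [AddCommGroup V] [Module ℂ V] {π : Representation ℂ G V}

theorem repIsIrreducible_iff : RepIsIrreducible π ↔ π.IsIrreducible := by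
  have nontrivial_iff : (∃ v : V, v ≠ 0) ↔ Nontrivial (Subrepresentation π) := by
    rw [← nontrivial_iff_exists_ne, ← Submodule.nontrivial_iff ℂ,
      ← not_subsingleton_iff_nontrivial, ← not_subsingleton_iff_nontrivial,
      ← subsingleton_iff_bot_eq_top, ← subsingleton_iff_bot_eq_top,
      ← Subrepresentation.toSubmodule_injective.eq_iff]
    rfl
  have bot_or_top_iff :
      (∀ W : Submodule ℂ V, (∀ g, ∀ v ∈ W, π g v ∈ W) → W = ⊥ ∨ W = ⊤) ↔
        ∀ W : Subrepresentation π, W = ⊥ ∨ W = ⊤ :=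
    ⟨fun h W => (h W.toSubmodule W.apply_mem_toSubmodule).imp
        (Subrepresentation.toSubmodule_injective ·) (Subrepresentation.toSubmodule_injective ·),
      fun h W hW => (h ⟨W, hW⟩).imp (congr_arg Subrepresentation.toSubmodule)
        (congr_arg Subrepresentation.toSubmodule)⟩
  rw [RepIsIrreducible, nontrivial_iff, bot_or_top_iff, Representation.IsIrreducible,
    isSimpleOrder_iff]

theorem exists_linearEquiv_iff_nonempty_equiv {W : Type} [AddCommGroup W] [Module ℂ W]
    {ρ : Representation ℂ G W} :
    (∃ e : V ≃ₗ[ℂ] W, ∀ g v, e (π g v) = ρ g (e v)) ↔ Nonempty (π.Equiv ρ) :=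
  ⟨fun ⟨e, he⟩ => ⟨.mk e fun g => LinearMap.ext (he g)⟩,
    fun ⟨e⟩ => ⟨e.toLinearEquiv, fun g v => e.toIntertwiningMap.isIntertwining _ _ g v⟩⟩

end Irreducible

/-- **The dimension of the center of `L¹_Φ(G,K)` equals the number of
irreducible representations of `G` occurring in `Ind_K^G Φ`** : given a
complete family of pairwise non-isomorphic irreducible representations of the
finite group `G`, the dimension of the center of the twisted Hecke algebra
equals the number of members of the family containing the character `Φ` of
`K`. -/
theorem twistedHeckeCenter_finrank
    (G : Type) [Group G] [Fintype G]
    (K : Subgroup G) [Fintype K] (Φ : K →* ℂˣ)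
    (I : Type) [Fintype I] (V : I → Type)
    [∀ i, AddCommGroup (V i)] [∀ i, Module ℂ (V i)]
    [∀ i, FiniteDimensional ℂ (V i)]
    (π : ∀ i, Representation ℂ G (V i))
    (hirr : ∀ i, RepIsIrreducible (π i))
    (hdisj : ∀ i j, i ≠ j →
      ¬∃ e : V i ≃ₗ[ℂ] V j, ∀ (g : G) (v : V i), e (π i g v) = π j g (e v))
    (hcomplete : ∀ (W : Type) [AddCommGroup W] [Module ℂ W]
      [FiniteDimensional ℂ W] (ρ : Representation ℂ G W), RepIsIrreducible ρ →
      ∃ i, ∃ e : W ≃ₗ[ℂ] V i, ∀ (g : G) (v : W), e (ρ g v) = π i g (e v)) :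
    Module.finrank ℂ ↥(twistedHeckeCenter G K Φ)
      = Nat.card {i : I // ∃ v : V i, v ≠ 0 ∧
          ∀ k : K, π i (k : G) v = (Φ k : ℂ) • v} := by
  have (i : I) : (π i).IsIrreducible := repIsIrreducible_iff.1 (hirr i)
  have hsurj := lift_monoidHomPi_surjective π fun i j hij =>
    ⟨fun e => hdisj i j hij (exists_linearEquiv_iff_nonempty_equiv.2 ⟨e⟩)⟩
  have hinj := lift_monoidHomPi_injective π fun W _ _ _ ρ hρ =>
    (hcomplete W ρ (repIsIrreducible_iff.2 hρ)).imp fun i => exists_linearEquiv_iff_nonempty_equiv.1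
  let e : ∀ i, Module.End ℂ (V i) := characterIdempotent Φ ((MonoidHom.pi π).comp K.subtype)
  have he_apply (i : I) : e i = characterIdempotent Φ ((π i).comp K.subtype) :=
    map_characterIdempotent Φ _ (Pi.evalAlgHom ℂ (fun i => Module.End ℂ (V i)) i)
  calc Module.finrank ℂ (twistedHeckeCenter G K Φ)
      = Module.finrank ℂ (cornerCenter ℂ e) :=
        finrank_twistedHeckeCenter_eq_finrank_cornerCenter
          (antiFourier_bijective _ ⟨hinj, hsurj⟩)
    _ = Nat.card {i // e i ≠ 0} :=
        finrank_cornerCenter_pi_end isIdempotentElem_characterIdempotent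
    _ = _ := Nat.card_congr <| Equiv.subtypeEquivRight fun i => by
        rw [he_apply]
        exact characterIdempotent_ne_zero_iff
end
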